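/- Let p and q be primes satisfying conditions (1) or conditions (2). Then the class number of the triquadratic field Q(√p, √q, i) (a CM field of degree 8 over Q) is odd. -/

import Mathlib

noncomputable section

open IntermediateField NumberField

/-- Conditions (1). -/
def Cond1 (p q : ℕ) : Prop :=
  p.Prime ∧ q.Prime ∧ p % 4 = 1 ∧ q % 4 = 3 ∧
    jacobiSym 2 p = -1 ∧ jacobiSym 2 q = 1 ∧ jacobiSym (p : ℤ) q = -1

/-- Conditions (2). -/
def Cond2 (p q : ℕ) : Prop :=
  p.Prime ∧ q.Prime ∧ p % 4 = 3 ∧ q % 4 = 3 ∧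
    jacobiSym 2 p = -1 ∧ jacobiSym 2 q = 1 ∧ jacobiSym (p : ℤ) q = -1

/-- The field `ℚ(√p, √q, i)` as a subfield of `ℂ`. -/
def Kf (p q : ℕ) : IntermediateField ℚ ℂ :=
  adjoin ℚ {((Real.sqrt p : ℝ) : ℂ), ((Real.sqrt q : ℝ) : ℂ), Complex.I}

/-- The subgroup of squares of a commutative group. -/
def squares (G : Type*) [CommGroup G] : Subgroup G := (powMonoidHom 2 : G →* G).range

theorem sq_mem_squares {G : Type*} [CommGroup G] (x : G) : x ^ 2 ∈ squares G := ⟨x, rfl⟩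

/-- The units of a number field modulo squares form a group of order `2 ^ (r₁ + r₂)`. -/
theorem index_squares_units (K : Type*) [Field K] [NumberField K] :
    (squares (𝓞 K)ˣ).index = 2 ^ Fintype.card (InfinitePlace K) := by
  have hQ : (squares ((𝓞 K)ˣ ⧸ Units.torsion K)).index = 2 ^ Units.rank K := by
    rw [← Units.finrank_modTorsion]
    exact AddSubgroup.index_range_nsmul (Additive ((𝓞 K)ˣ ⧸ Units.torsion K)) 2
  have hT : (squares (Units.torsion K)).index = 2 := by
    rw [squares, IsCyclic.index_powMonoidHom_range, Nat.gcd_eq_right_iff_dvd]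
    exact even_iff_two_dvd.mp (Units.even_torsionOrder K)
  have h1 : squares (𝓞 K)ˣ ⊔ Units.torsion K =
      (squares ((𝓞 K)ˣ ⧸ Units.torsion K)).comap (QuotientGroup.mk' _) := by
    have : squares ((𝓞 K)ˣ ⧸ Units.torsion K) =
        (squares (𝓞 K)ˣ).map (QuotientGroup.mk' (Units.torsion K)) := by
      ext x
      constructor
      · rintro ⟨y, rfl⟩
        obtain ⟨y, rfl⟩ := QuotientGroup.mk'_surjective _ y
        exact ⟨y ^ 2, sq_mem_squares y, by simp⟩
      · rintro ⟨_, ⟨y, rfl⟩, rfl⟩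
        exact ⟨QuotientGroup.mk' _ y, by simp⟩
    rw [this, Subgroup.comap_map_eq, QuotientGroup.ker_mk']
  have h2 : squares (Units.torsion K) = (squares (𝓞 K)ˣ).subgroupOf (Units.torsion K) := by
    ext x
    constructor
    · rintro ⟨y, rfl⟩
      exact ⟨y, by simp⟩
    · rintro ⟨y, hy⟩
      have hy' : y ^ 2 = x := hy
      have : y ∈ Units.torsion K := by
        have hx : IsOfFinOrder (y ^ 2) := hy' ▸ x.2
        exact (isOfFinOrder_pow.mp hx).resolve_right (by norm_num)
      exact ⟨⟨y, this⟩, Subtype.ext hy'⟩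
  have h3 := Subgroup.relIndex_mul_index (le_sup_left : squares (𝓞 K)ˣ ≤ _ ⊔ Units.torsion K)
  have h4 : (squares (𝓞 K)ˣ).relIndex (squares (𝓞 K)ˣ ⊔ Units.torsion K) = 2 := by
    rw [Subgroup.relIndex_sup_left, Subgroup.relIndex, ← h2, hT]
  rw [h4, h1, Subgroup.index_comap_of_surjective _ (QuotientGroup.mk'_surjective _), hQ] at h3
  rw [← h3, ← pow_succ', Units.rank, Nat.sub_add_cancel Fintype.card_pos]

open IsDedekindDomain nonZeroDivisors

/-- Nonzero field elements whose valuation is even at every prime outside `S`. -/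
def evenOutside (R K : Type*) [CommRing R] [IsDedekindDomain R] [Field K] [Algebra R K]
    [IsFractionRing R K] (S : Set (HeightOneSpectrum R)) : Subgroup Kˣ :=
  ⨅ v ∈ Sᶜ, (squares (Multiplicative ℤ)).comap v.valuationOfNeZero

section evenOutside

variable {R K : Type*} [CommRing R] [IsDedekindDomain R] [Field K] [Algebra R K]
    [IsFractionRing R K]

theorem mem_evenOutside {S : Set (HeightOneSpectrum R)} {x : Kˣ} :
    x ∈ evenOutside R K S ↔ ∀ v ∉ S, v.valuationOfNeZero x ∈ squares (Multiplicative ℤ) := by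
  simp [evenOutside, Subgroup.mem_iInf]

theorem squares_le_evenOutside (S : Set (HeightOneSpectrum R)) :
    squares Kˣ ≤ evenOutside R K S := by
  rintro _ ⟨y, rfl⟩
  exact mem_evenOutside.mpr fun v _ => ⟨v.valuationOfNeZero y, by simp⟩

theorem index_squares_int : (squares (Multiplicative ℤ)).index = 2 :=
  (AddSubgroup.index_range_nsmul ℤ 2).trans (by simp)

theorem relIndex_evenOutside_insert (S : Set (HeightOneSpectrum R)) (v : HeightOneSpectrum R) :
    (evenOutside R K S).relIndex (evenOutside R K (insert v S)) ∣ 2 := by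
  have h : (squares (Multiplicative ℤ)).comap (v.valuationOfNeZero (K := K)) ⊓
      evenOutside R K (insert v S) ≤ evenOutside R K S := by
    rintro x ⟨hx, hx'⟩
    rw [mem_evenOutside]
    intro w hw
    by_cases h : w = v
    · exact h ▸ hx
    · exact mem_evenOutside.mp hx' w (by simp [h, hw])
  refine (Subgroup.relIndex_dvd_of_le_left _ h).trans ?_
  rw [Subgroup.inf_relIndex_right, Subgroup.relIndex_comap, ← index_squares_int]
  exact Subgroup.relIndex_dvd_index_of_normal _ _

theorem relIndex_evenOutside_dvd (S : Finset (HeightOneSpectrum R)) :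
    (evenOutside R K ∅).relIndex (evenOutside R K (S : Set (HeightOneSpectrum R))) ∣
      2 ^ S.card := by
  classical
  induction S using Finset.induction_on with
  | empty => simp
  | insert v S hv ih =>
    have hle : ∀ {S T : Set (HeightOneSpectrum R)}, S ⊆ T → evenOutside R K S ≤ evenOutside R K T :=
      fun hST x hx => mem_evenOutside.mpr fun w hw => mem_evenOutside.mp hx w fun h => hw (hST h)
    rw [Finset.coe_insert, Finset.card_insert_of_notMem hv, pow_succ,
      ← Subgroup.relIndex_mul_relIndex _ _ _ (hle (Set.empty_subset (S : Set _)))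
        (hle (Set.subset_insert v S))]
    exact mul_dvd_mul ih (relIndex_evenOutside_insert _ _)

end evenOutside

section classGroup

variable {R K : Type*} [CommRing R] [IsDedekindDomain R] [Field K] [Algebra R K]
    [IsFractionRing R K]

theorem valuationOfNeZero_of_eq_algebraMap {x : Kˣ} {a : R} (ha : a ≠ 0)
    (hx : (x : K) = algebraMap R K a) (v : HeightOneSpectrum R) :
    v.valuationOfNeZero x = Multiplicative.ofAdd
      (-((Associates.mk v.asIdeal).count (Associates.mk (Ideal.span {a})).factors : ℤ)) := by
  rw [← WithZero.coe_inj, HeightOneSpectrum.valuationOfNeZero_eq, hx,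
    HeightOneSpectrum.valuation_of_algebraMap, HeightOneSpectrum.intValuation_if_neg v ha]
  rfl

theorem ofAdd_neg_mem_squares_iff {n : ℕ} :
    Multiplicative.ofAdd (-(n : ℤ)) ∈ squares (Multiplicative ℤ) ↔ Even n := by
  constructor
  · rintro ⟨y, hy⟩
    have h : 2 * y.toAdd = -(n : ℤ) := by
      have := congrArg Multiplicative.toAdd hy
      simpa using this
    exact (Int.even_coe_nat n).mp ⟨-y.toAdd, by linarith⟩
  · rintro ⟨m, rfl⟩
    exact ⟨Multiplicative.ofAdd (-(m : ℤ)), by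
      apply Multiplicative.toAdd.injective
      simp; ring⟩

theorem exists_sq_eq_of_even_count {I : Ideal R} (hI : I ≠ 0)
    (h : ∀ v : HeightOneSpectrum R,
      Even ((Associates.mk v.asIdeal).count (Associates.mk I).factors)) :
    ∃ J : Ideal R, J ^ 2 = I := by
  choose f hf using h
  refine ⟨∏ᶠ v : HeightOneSpectrum R, v.asIdeal ^ f v, ?_⟩
  rw [finprod_pow]
  · refine Eq.trans (finprod_congr fun v => ?_) (Ideal.finprod_heightOneSpectrum_factorization hI)
    rw [HeightOneSpectrum.maxPowDividing, hf v, ← pow_mul, mul_two]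
  · refine (Ideal.hasFiniteMulSupport hI).subset ?_
    intro v hv hv'
    replace hv' : v.maxPowDividing I = 1 := hv'
    refine hv ?_
    rw [HeightOneSpectrum.maxPowDividing, hf v, pow_add] at hv'
    exact (mul_eq_one.mp hv').1

theorem mem_evenOutside_empty_iff {x : Kˣ} {a : R} (ha : a ≠ 0)
    (hx : (x : K) = algebraMap R K a) :
    x ∈ evenOutside R K ∅ ↔ ∃ I : Ideal R, I ^ 2 = Ideal.span {a} := by
  have ha' : Ideal.span {a} ≠ 0 := by simpa using ha
  simp only [mem_evenOutside, Set.mem_empty_iff_false, not_false_eq_true, forall_const,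
    valuationOfNeZero_of_eq_algebraMap ha hx, ofAdd_neg_mem_squares_iff]
  refine ⟨exists_sq_eq_of_even_count ha', ?_⟩
  rintro ⟨I, hI⟩ v
  have hI0 : I ≠ 0 := by rintro rfl; exact ha' (by rw [← hI]; simp)
  rw [← hI, Associates.mk_pow,
    Associates.count_pow (Associates.mk_ne_zero.mpr hI0) v.associates_irreducible]
  exact even_two_mul _

variable (R) in
theorem exists_eq_algebraMap_mul_sq (x : Kˣ) :
    ∃ (a : R) (z y : Kˣ), a ≠ 0 ∧ (z : K) = algebraMap R K a ∧ x = z * y ^ 2 := by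
  obtain ⟨a, b, hb, h⟩ := IsFractionRing.div_surjective (A := R) (x : K)
  have hb0 : algebraMap R K b ≠ 0 := by
    simpa using nonZeroDivisors.ne_zero hb
  have ha0 : algebraMap R K a ≠ 0 := by
    intro h0
    rw [h0, zero_div] at h
    exact x.ne_zero h.symm
  refine ⟨a * b, Units.mk0 (algebraMap R K (a * b)) (by rw [map_mul]; exact mul_ne_zero ha0 hb0),
    (Units.mk0 _ hb0)⁻¹, ?_, rfl, ?_⟩
  · rintro h0
    exact mul_ne_zero ha0 hb0 (by rw [← map_mul, h0, map_zero])
  · ext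
    simp only [Units.val_mul, Units.val_pow_eq_pow_val, Units.val_mk0, Units.val_inv_eq_inv_val,
      ← h, map_mul]
    field_simp

variable (R K) in
/-- Integral units times squares of nonzero field elements. -/
def unitsMulSquares : Subgroup Kˣ := (Units.map (algebraMap R K).toMonoidHom).range ⊔ squares Kˣ

theorem units_le_evenOutside (S : Set (HeightOneSpectrum R)) :
    (Units.map (algebraMap R K).toMonoidHom).range ≤ evenOutside R K S := by
  rintro _ ⟨u, rfl⟩
  refine mem_evenOutside.mpr fun v _ => ?_
  have := HeightOneSpectrum.valuation_of_unit_eq (K := K) v u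
  exact this ▸ one_mem _

theorem unitsMulSquares_le_evenOutside (S : Set (HeightOneSpectrum R)) :
    unitsMulSquares R K ≤ evenOutside R K S :=
  sup_le (units_le_evenOutside S) (squares_le_evenOutside S)

theorem relIndex_squares_unitsMulSquares :
    (squares Kˣ).relIndex (unitsMulSquares R K) = (squares Rˣ).index := by
  rw [unitsMulSquares, Subgroup.relIndex_sup_right, MonoidHom.range_eq_map,
    ← Subgroup.relIndex_comap, Subgroup.relIndex_top_right]
  congr 1
  ext u
  constructor
  · rintro ⟨y, hy⟩
    have hy' : (y : K) ^ 2 = algebraMap R K u := congrArg Units.val hy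
    obtain ⟨b, hb⟩ := IsIntegrallyClosed.exists_algebraMap_eq_of_isIntegral_pow (R := R)
      two_pos (hy' ▸ isIntegral_algebraMap)
    have hbu : b ^ 2 = u := by
      apply IsFractionRing.injective R K
      rw [map_pow, hb, hy']
    have : IsUnit b := (isUnit_pow_iff two_ne_zero).mp (hbu ▸ u.isUnit)
    exact ⟨this.unit, Units.ext hbu⟩
  · rintro ⟨y, rfl⟩
    exact ⟨Units.map (algebraMap R K).toMonoidHom y, (map_pow _ _ _).symm⟩

theorem evenOutside_empty_le_of_odd [Finite (ClassGroup R)] (h : Odd (Nat.card (ClassGroup R))) :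
    evenOutside R K ∅ ≤ unitsMulSquares R K := by
  intro x hx
  obtain ⟨a, z, y, ha, hz, rfl⟩ := exists_eq_algebraMap_mul_sq R x
  refine mul_mem ?_ (le_sup_right (a := (Units.map (algebraMap R K).toMonoidHom).range)
    (sq_mem_squares y))
  have hz' : z ∈ evenOutside R K ∅ :=
    (Subgroup.mul_mem_cancel_right _ (squares_le_evenOutside _ (sq_mem_squares y))).mp hx
  obtain ⟨I, hI⟩ := (mem_evenOutside_empty_iff ha hz).mp hz'
  have ha' : Ideal.span {a} ≠ ⊥ := by simpa using ha
  have hI0 : I ∈ (Ideal R)⁰ := by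
    rw [mem_nonZeroDivisors_iff_ne_zero]; rintro rfl; exact ha' (by rw [← hI]; simp)
  have h1 : ClassGroup.mk0 (⟨I, hI0⟩ : (Ideal R)⁰) ^ 2 = 1 := by
    rw [← map_pow, ClassGroup.mk0_eq_one_iff]
    change (I ^ 2).IsPrincipal
    rw [hI]
    exact ⟨⟨a, rfl⟩⟩
  have h2 : ClassGroup.mk0 (⟨I, hI0⟩ : (Ideal R)⁰) = 1 := by
    have hc : (Nat.card (ClassGroup R)).Coprime 2 := h.coprime_two_right
    rw [← orderOf_eq_one_iff]
    exact Nat.eq_one_of_dvd_coprimes hc (orderOf_dvd_natCard _) (orderOf_dvd_of_pow_eq_one h1)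
  obtain ⟨⟨b, hb⟩⟩ := (ClassGroup.mk0_eq_one_iff hI0).mp h2
  rw [Ideal.submodule_span_eq] at hb
  have hab : Ideal.span {b ^ 2} = Ideal.span {a} := by
    rw [← hI, hb, Ideal.span_singleton_pow]
  obtain ⟨u, hu⟩ := Ideal.span_singleton_eq_span_singleton.mp hab
  have hb0 : algebraMap R K b ≠ 0 := by
    have : b ≠ 0 := by rintro rfl; apply ha; simpa using hu.symm
    simpa using this
  have : z = Units.map (algebraMap R K).toMonoidHom u * (Units.mk0 _ hb0) ^ 2 := by
    ext
    simp [hz, ← hu, mul_comm]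
  rw [this]
  exact Subgroup.mul_mem_sup ⟨u, rfl⟩ (sq_mem_squares _)

variable (K) in
theorem odd_card_classGroup [Finite (ClassGroup R)]
    (h : evenOutside R K ∅ ≤ unitsMulSquares R K) : Odd (Nat.card (ClassGroup R)) := by
  by_contra hodd
  rw [Nat.not_odd_iff_even, even_iff_two_dvd] at hodd
  have : Fact (Nat.Prime 2) := ⟨Nat.prime_two⟩
  obtain ⟨c, hc⟩ := exists_prime_orderOf_dvd_card' 2 hodd
  obtain ⟨⟨I, hI0⟩, rfl⟩ := ClassGroup.mk0_surjective c
  have hne : ClassGroup.mk0 (⟨I, hI0⟩ : (Ideal R)⁰) ≠ 1 := by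
    intro h1; rw [h1, orderOf_one] at hc; norm_num at hc
  have h1 : ClassGroup.mk0 (⟨I, hI0⟩ : (Ideal R)⁰) ^ 2 = 1 := hc ▸ pow_orderOf_eq_one _
  rw [← map_pow, ClassGroup.mk0_eq_one_iff] at h1
  obtain ⟨⟨a, ha⟩⟩ := h1
  replace ha : I ^ 2 = Ideal.span {a} := ha
  have hI0' : I ≠ 0 := nonZeroDivisors.ne_zero hI0
  have ha0 : a ≠ 0 := by
    rintro rfl
    exact pow_ne_zero 2 hI0' (by rw [ha]; simp)
  have ha0' : algebraMap R K a ≠ 0 := by simpa using ha0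
  have hmem : Units.mk0 _ ha0' ∈ evenOutside R K ∅ :=
    (mem_evenOutside_empty_iff ha0 rfl).mpr ⟨I, ha⟩
  obtain ⟨_, ⟨u, rfl⟩, _, ⟨y, rfl⟩, huy⟩ := Subgroup.mem_sup.mp (h hmem)
  have hy : (y : K) ^ 2 = algebraMap R K (↑u⁻¹ * a) := by
    have := congrArg Units.val huy
    simp only [RingHom.toMonoidHom_eq_coe, powMonoidHom_apply, Units.val_mul, Units.coe_map,
      MonoidHom.coe_coe, Units.val_pow_eq_pow_val, Units.val_mk0] at this
    rw [map_mul, ← this, ← mul_assoc, ← map_mul]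
    simp
  obtain ⟨b, hb⟩ := IsIntegrallyClosed.exists_algebraMap_eq_of_isIntegral_pow (R := R)
    two_pos (hy ▸ isIntegral_algebraMap)
  have hba : b ^ 2 = ↑u⁻¹ * a := by
    apply IsFractionRing.injective R K
    rw [map_pow, hb, hy]
  have hIb : I ^ 2 = Ideal.span {b} ^ 2 := by
    rw [ha, Ideal.span_singleton_pow, hba, Ideal.span_singleton_mul_left_unit (Units.isUnit _)]
  have : I = Ideal.span {b} := by
    apply dvd_antisymm
    · exact (UniqueFactorizationMonoid.pow_dvd_pow_iff_dvd two_ne_zero).mp hIb.dvd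
    · exact (UniqueFactorizationMonoid.pow_dvd_pow_iff_dvd two_ne_zero).mp hIb.symm.dvd
  exact hne ((ClassGroup.mk0_eq_one_iff hI0).mpr ⟨⟨b, this⟩⟩)

end classGroup

section indices

variable {G : Type*} [CommGroup G]

theorem relIndex_dvd_of_le (H : Subgroup G) {A B : Subgroup G} (h : A ≤ B) :
    H.relIndex A ∣ H.relIndex B := by
  rw [← Subgroup.relIndex_sup_left (K := H) (H := A),
    ← Subgroup.relIndex_sup_left (K := H) (H := B),
    ← Subgroup.relIndex_mul_relIndex H (H ⊔ A) (H ⊔ B) le_sup_left (sup_le_sup_left h H)]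
  exact dvd_mul_right _ _

theorem two_dvd_relIndex {H B : Subgroup G} (hH : squares G ≤ H) {d : G} (hd : d ∈ B)
    (hd' : d ∉ H) : 2 ∣ H.relIndex B := by
  have h2 : orderOf (QuotientGroup.mk (⟨d, hd⟩ : B) : B ⧸ H.subgroupOf B) = 2 := by
    have : Fact (Nat.Prime 2) := ⟨Nat.prime_two⟩
    refine orderOf_eq_prime ?_ ?_
    · rw [← QuotientGroup.mk_pow, QuotientGroup.eq_one_iff]
      exact hH (sq_mem_squares d)
    · rwa [Ne, QuotientGroup.eq_one_iff]
  rw [← h2]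
  exact orderOf_dvd_natCard _

end indices

section quadratic

variable {F K : Type*} [Field F] [Field K] [Algebra F K]

theorem sq_eq_trace_mul_sub_norm (h2 : Module.finrank F K = 2) (y : K) :
    ∃ t : F, y ^ 2 = algebraMap F K t * y - algebraMap F K (Algebra.norm F y) := by
  have : Module.Finite F K := Module.finite_of_finrank_pos (by omega)
  obtain ⟨f, hf⟩ : ∃ f : Module.End F K, f = Algebra.lmul F K y := ⟨_, rfl⟩
  have hf1 (z : K) : f z = y * z := by rw [hf]; rfl
  have hdeg : f.charpoly.natDegree = 2 := by rw [LinearMap.charpoly_natDegree, h2]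
  have hmon := f.charpoly_monic
  have hc0 : f.charpoly.coeff 0 = Algebra.norm F y := by
    have := LinearMap.det_eq_sign_charpoly_coeff f
    rw [h2] at this
    rw [Algebra.norm_apply, ← hf]
    simpa using this.symm
  have hc2 : f.charpoly.coeff 2 = 1 := by
    rw [← hdeg]; exact hmon
  have key := congrArg (fun g : Module.End F K => g 1) f.aeval_self_charpoly
  refine ⟨-f.charpoly.coeff 1, ?_⟩
  rw [Polynomial.aeval_eq_sum_range, hdeg] at key
  simp only [Finset.sum_range_succ, Finset.sum_range_zero, hc0, hc2] at key
  simp only [zero_add, pow_zero, pow_one, pow_two, one_smul, LinearMap.add_apply,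
    LinearMap.smul_apply, Module.End.one_apply, Module.End.mul_apply, hf1, LinearMap.zero_apply,
    mul_one] at key
  simp only [Algebra.smul_def] at key
  rw [map_neg]
  linear_combination key

theorem exists_sq_mul_algebraMap (h2 : Module.finrank F K = 2) {x : K} {b : F} (hb : b ≠ 0)
    (hx : Algebra.norm F x = b ^ 2) :
    ∃ (y : K) (a : F), y ≠ 0 ∧ a ≠ 0 ∧ x = y ^ 2 * algebraMap F K a := by
  obtain ⟨t, ht⟩ := sq_eq_trace_mul_sub_norm h2 x
  rw [hx, map_pow] at ht
  have hb' : algebraMap F K b ≠ 0 := by simpa using hb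
  by_cases h : x = -algebraMap F K b
  · exact ⟨1, -b, one_ne_zero, neg_ne_zero.mpr hb, by simp [h]⟩
  · have h1 : x + algebraMap F K b ≠ 0 := fun h0 => h (eq_neg_of_add_eq_zero_left h0)
    have key : (x + algebraMap F K b) ^ 2 = algebraMap F K (t + 2 * b) * x := by
      simp only [map_add, map_mul, map_ofNat]
      linear_combination ht
    have h3 : algebraMap F K (t + 2 * b) ≠ 0 := by
      intro h0
      rw [h0, zero_mul] at key
      exact h1 (pow_eq_zero_iff two_ne_zero |>.mp key)
    refine ⟨x + algebraMap F K b, (t + 2 * b)⁻¹, h1, ?_, ?_⟩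
    · rintro h0
      exact h3 (by rw [inv_eq_zero.mp h0, map_zero])
    · rw [key, map_inv₀]
      field_simp

variable [NumberField F] [NumberField K]

theorem norm_mem_evenOutside {x : Kˣ} (hx : x ∈ evenOutside (𝓞 K) K ∅) :
    Units.map (Algebra.norm F (S := K)) x ∈ evenOutside (𝓞 F) F ∅ := by
  obtain ⟨a, z, y, ha, hz, rfl⟩ := exists_eq_algebraMap_mul_sq (𝓞 K) x
  rw [map_mul, map_pow]
  refine mul_mem ?_ (squares_le_evenOutside _ (sq_mem_squares _))
  have hz' : z ∈ evenOutside (𝓞 K) K ∅ :=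
    (Subgroup.mul_mem_cancel_right _ (squares_le_evenOutside _ (sq_mem_squares y))).mp hx
  obtain ⟨I, hI⟩ := (mem_evenOutside_empty_iff ha hz).mp hz'
  refine (mem_evenOutside_empty_iff (a := Algebra.intNorm (𝓞 F) (𝓞 K) a) ?_ ?_).mpr
    ⟨Ideal.relNorm (𝓞 F) I, ?_⟩
  · rwa [Ne, Algebra.intNorm_eq_zero]
  · rw [Algebra.algebraMap_intNorm (K := F) (L := K), ← hz]
    rfl
  · rw [← map_pow, hI, Ideal.relNorm_singleton]

/-- A form of the ambiguous class number formula: if few primes ramify in a quadratic extension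
`K / F` and `F` has odd class number, then so does `K`. -/
theorem odd_classNumber_of_quadratic (h2 : Module.finrank F K = 2)
    (hplaces : Fintype.card (InfinitePlace K) = 2 * Fintype.card (InfinitePlace F))
    (hF : Odd (classNumber F)) (S : Finset (HeightOneSpectrum (𝓞 F)))
    (hS : ∀ a : Fˣ, Units.map (algebraMap F K).toMonoidHom a ∈ evenOutside (𝓞 K) K ∅ →
      a ∈ evenOutside (𝓞 F) F S)
    (d : Fˣ) (hd : ¬ IsSquare (d : F)) (hd' : IsSquare (algebraMap F K d))
    (hcard : S.card ≤ 1 ∨ S.card ≤ 2 ∧ ∃ ε : (𝓞 F)ˣ, ∀ x : K, Algebra.norm F x ≠ (ε : F)) :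
    Odd (classNumber K) := by
  set j : Fˣ →* Kˣ := Units.map (algebraMap F K).toMonoidHom with hj
  set N : Kˣ →* Fˣ := Units.map (Algebra.norm F (S := K)) with hN
  set A := evenOutside (𝓞 K) K ∅
  set E := evenOutside (𝓞 F) F ∅ with hE
  set ES := evenOutside (𝓞 F) F (S : Set (HeightOneSpectrum (𝓞 F)))
  set R := Fintype.card (InfinitePlace F) with hR
  have hdK : d ∈ (squares Kˣ).comap j := by
    obtain ⟨r, hr⟩ := hd'
    have hr0 : r ≠ 0 := by
      rintro rfl
      simp at hr
    exact ⟨Units.mk0 r hr0, Units.ext (by simp [hj, hr, pow_two])⟩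
  have hdS : d ∈ ES := hS d (squares_le_evenOutside _ hdK)
  have hd'' : d ∉ squares Fˣ := by
    rintro ⟨y, rfl⟩
    exact hd ⟨y, by simp [pow_two]⟩
  have hEidx : (squares Fˣ).relIndex E = 2 ^ R := by
    have : E = unitsMulSquares (𝓞 F) F :=
      le_antisymm (evenOutside_empty_le_of_odd (by rwa [Nat.card_eq_fintype_card]))
        (unitsMulSquares_le_evenOutside _)
    rw [this, relIndex_squares_unitsMulSquares, index_squares_units]
  have hEES : E ≤ ES := fun x hx => mem_evenOutside.mpr fun w _ =>
    mem_evenOutside.mp hx w (by simp)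
  have hESidx : (squares Fˣ).relIndex ES ∣ 2 ^ R * 2 ^ S.card := by
    rw [← Subgroup.relIndex_mul_relIndex _ E ES (squares_le_evenOutside _) hEES, hEidx]
    exact mul_dvd_mul_left _ (relIndex_evenOutside_dvd S)
  have hker : 2 * (squares Kˣ).relIndex (A ⊓ (squares Fˣ).comap N) ∣ 2 ^ R * 2 ^ S.card := by
    refine dvd_trans ?_ hESidx
    have hsq : squares Fˣ ≤ (squares Kˣ).comap j := by
      rintro _ ⟨y, rfl⟩
      exact ⟨j y, (map_pow _ _ _).symm⟩
    rw [← Subgroup.relIndex_mul_relIndex (squares Fˣ) ((squares Kˣ).comap j ⊓ ES) ES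
      (le_inf hsq (squares_le_evenOutside _)) inf_le_right, Subgroup.inf_relIndex_right]
    refine mul_dvd_mul (two_dvd_relIndex le_rfl ⟨hdK, hdS⟩ hd'') ?_
    rw [Subgroup.relIndex_comap,
      ← Subgroup.relIndex_sup_left (K := squares Kˣ) (H := Subgroup.map j ES)]
    refine relIndex_dvd_of_le _ ?_
    intro x hx
    obtain ⟨hxA, b, hb⟩ := Subgroup.mem_inf.mp hx
    obtain ⟨y, a, hy, ha, hxy⟩ := exists_sq_mul_algebraMap h2 (x := (x : K)) b.ne_zero
      (by simpa [hN] using (congrArg Units.val hb).symm)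
    have hxy' : x = (Units.mk0 y hy) ^ 2 * j (Units.mk0 a ha) := by
      ext
      simp [hj, hxy]
    have haA : j (Units.mk0 a ha) ∈ A := by
      rw [hxy'] at hxA
      exact (Subgroup.mul_mem_cancel_left _
        (squares_le_evenOutside _ (sq_mem_squares _))).mp hxA
    rw [hxy']
    exact Subgroup.mul_mem_sup (sq_mem_squares _) ⟨_, hS _ haA, rfl⟩
  have him : (A ⊓ (squares Fˣ).comap N).relIndex A ∣ (squares Fˣ).relIndex (E ⊓ N.range) := by
    rw [Subgroup.inf_relIndex_left, Subgroup.relIndex_comap]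
    refine relIndex_dvd_of_le _ ?_
    rintro _ ⟨x, hx, rfl⟩
    exact ⟨norm_mem_evenOutside hx, x, rfl⟩
  have himE : (squares Fˣ).relIndex (E ⊓ N.range) ∣ 2 ^ R :=
    hEidx ▸ relIndex_dvd_of_le _ inf_le_left
  have htot : (squares Kˣ).relIndex A ∣ 2 ^ (2 * R) := by
    rw [← Subgroup.relIndex_mul_relIndex (squares Kˣ) (A ⊓ (squares Fˣ).comap N) A
      (le_inf (squares_le_evenOutside _) ?_) inf_le_left]
    · rcases hcard with hc | ⟨hc, ε, hε⟩
      · have h4 := mul_dvd_mul hker (him.trans himE)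
        have h5 : 2 ^ R * 2 ^ S.card * 2 ^ R ∣ 2 * 2 ^ (2 * R) := by
          rw [← pow_add, ← pow_add, ← pow_succ']
          exact pow_dvd_pow _ (by omega)
        have h6 := h4.trans h5
        rw [mul_assoc] at h6
        exact Nat.dvd_of_mul_dvd_mul_left two_pos h6
      · have hsqN : squares Fˣ ≤ E ⊓ N.range := by
          refine le_inf (squares_le_evenOutside _) ?_
          rintro _ ⟨y, rfl⟩
          exact ⟨j y, Units.ext (by simp [hj, hN, Algebra.norm_algebraMap, h2])⟩
        have h3 : (squares Fˣ).relIndex (E ⊓ N.range) * 2 ∣ 2 ^ R := by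
          rw [← hEidx,
            ← Subgroup.relIndex_mul_relIndex (squares Fˣ) (E ⊓ N.range) E hsqN inf_le_left]
          refine mul_dvd_mul_left _ (two_dvd_relIndex hsqN (units_le_evenOutside _ ⟨ε, rfl⟩) ?_)
          rintro ⟨-, x, hx⟩
          exact hε x (congrArg Units.val hx)
        have h4 := mul_dvd_mul hker ((mul_dvd_mul_right him 2).trans h3)
        have h5 : 2 ^ R * 2 ^ S.card * 2 ^ R ∣ 2 * 2 * 2 ^ (2 * R) := by
          rw [← pow_add, ← pow_add, mul_assoc, ← pow_succ', ← pow_succ']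
          exact pow_dvd_pow _ (by omega)
        have h6 := h4.trans h5
        rw [show ∀ a b : ℕ, 2 * a * (b * 2) = 2 * 2 * (a * b) from fun a b => by ring] at h6
        exact Nat.dvd_of_mul_dvd_mul_left (by norm_num) h6
    · rintro _ ⟨y, rfl⟩
      exact ⟨N y, (map_pow _ _ _).symm⟩
  have hU := Subgroup.relIndex_mul_relIndex (squares Kˣ) (unitsMulSquares (𝓞 K) K) A le_sup_right
    (unitsMulSquares_le_evenOutside _)
  rw [relIndex_squares_unitsMulSquares, index_squares_units, hplaces] at hU
  rw [← hU] at htot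
  have h1 : (unitsMulSquares (𝓞 K) K).relIndex A = 1 := by
    rw [← Nat.dvd_one]
    exact Nat.dvd_of_mul_dvd_mul_left (k := 2 ^ (2 * R)) (by positivity) (by rwa [mul_one])
  have := odd_card_classGroup K (Subgroup.relIndex_eq_one.mp h1)
  rwa [Nat.card_eq_fintype_card] at this

end quadratic

section ramification

variable {F K : Type*} [Field F] [Field K] [Algebra F K] [NumberField F] [NumberField K]

theorem even_valuation_of_unramified {v : HeightOneSpectrum (𝓞 F)} {w : HeightOneSpectrum (𝓞 K)}
    [w.asIdeal.LiesOver v.asIdeal]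
    (h : ¬ w.asIdeal ^ 2 ∣ Ideal.map (algebraMap (𝓞 F) (𝓞 K)) v.asIdeal) {a : Fˣ}
    (ha : Units.map (algebraMap F K).toMonoidHom a ∈ evenOutside (𝓞 K) K ∅) :
    v.valuationOfNeZero a ∈ squares (Multiplicative ℤ) := by
  have he : v.asIdeal.ramificationIdx' w.asIdeal = 1 := by
    refine Ideal.ramificationIdx'_spec ?_ fun hle => h (Ideal.dvd_iff_le.mpr hle)
    rw [pow_one, Ideal.map_le_iff_le_comap]
    exact (Ideal.over_def w.asIdeal v.asIdeal).le
  have h1 := HeightOneSpectrum.valuation_liesOver K v w (a : F)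
  rw [he, pow_one] at h1
  have h2 : v.valuationOfNeZero a =
      w.valuationOfNeZero (Units.map (algebraMap F K).toMonoidHom a) := by
    rw [← WithZero.coe_inj, HeightOneSpectrum.valuationOfNeZero_eq,
      HeightOneSpectrum.valuationOfNeZero_eq, h1]
    rfl
  rw [h2]
  exact mem_evenOutside.mp ha w (Set.notMem_empty _)

theorem not_sq_dvd_map_of_sqrt {D : ℤ} (hD : D % 4 = 1) {δ : K} (hδ : δ ^ 2 = D)
    (htop : Algebra.adjoin F {δ} = ⊤)
    {v : HeightOneSpectrum (𝓞 F)} (hv : (D : 𝓞 F) ∉ v.asIdeal)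
    (P : Ideal (𝓞 K)) [hP : P.LiesOver v.asIdeal] [P.IsPrime] :
    ¬ P ^ 2 ∣ Ideal.map (algebraMap (𝓞 F) (𝓞 K)) v.asIdeal := by
  intro hdvd
  have h1 := pow_sub_one_dvd_differentIdeal (𝓞 F) P 2 v.ne_bot hdvd
  rw [show 2 - 1 = 1 from rfl, pow_one, Ideal.dvd_iff_le] at h1
  obtain ⟨m, hm⟩ : ∃ m : ℤ, D = 4 * m + 1 := ⟨D / 4, by omega⟩
  have hθ : IsIntegral ℤ ((1 + δ) / 2) := by
    refine ⟨.X ^ 2 - .X - .C m, ?_, ?_⟩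
    · monicity!
    · have : (D : K) = 4 * m + 1 := by rw [hm]; push_cast; ring
      simp only [Polynomial.eval₂_sub, Polynomial.eval₂_X_pow, Polynomial.eval₂_X,
        Polynomial.eval₂_C]
      rw [eq_intCast]
      linear_combination (hδ + this) / 4
  let θ : 𝓞 K := ⟨_, hθ⟩
  have hθδ : algebraMap (𝓞 K) K θ = (1 + δ) / 2 := rfl
  have hθtop : Algebra.adjoin F {algebraMap (𝓞 K) K θ} = ⊤ := by
    rw [← htop]
    refine le_antisymm ?_ (Algebra.adjoin_le ?_)
    · rw [htop]; exact le_top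
    · rw [Set.singleton_subset_iff]
      have h3 : δ = 2 * algebraMap (𝓞 K) K θ - 1 := by rw [hθδ]; ring
      have := Algebra.self_mem_adjoin_singleton F (algebraMap (𝓞 K) K θ)
      rw [h3, SetLike.mem_coe]
      exact sub_mem (mul_mem (natCast_mem _ 2) this) (one_mem _)
  have h2 := h1 (aeval_derivative_mem_differentIdeal (𝓞 F) F K θ hθtop)
  obtain ⟨g, hg⟩ : minpoly (𝓞 F) θ ∣ .X ^ 2 - .X - .C (m : 𝓞 F) := by
    refine minpoly.isIntegrallyClosed_dvd (Algebra.IsIntegral.isIntegral θ) ?_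
    apply FaithfulSMul.algebraMap_injective (𝓞 K) K
    have : (D : K) = 4 * m + 1 := by rw [hm]; push_cast; ring
    simp only [map_sub, map_pow, Polynomial.aeval_X, hθδ, map_intCast, map_zero]
    linear_combination (hδ + this) / 4
  have h4 : 2 * θ - 1 ∈ P := by
    have := congrArg (fun f => Polynomial.aeval θ (Polynomial.derivative f)) hg
    simp only [Polynomial.derivative_mul, Polynomial.derivative_X_sq,
      Polynomial.derivative_X, Polynomial.derivative_C, map_add, map_sub, map_mul, minpoly.aeval,
      zero_mul, add_zero, sub_zero, map_one, Polynomial.aeval_X, map_ofNat] at this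
    rw [this]
    exact Ideal.mul_mem_right _ _ h2
  apply hv
  rw [hP.over, Ideal.under_def, Ideal.mem_comap]
  have : algebraMap (𝓞 F) (𝓞 K) D = (2 * θ - 1) * (2 * θ - 1) := by
    apply FaithfulSMul.algebraMap_injective (𝓞 K) K
    rw [← IsScalarTower.algebraMap_apply, map_intCast, ← hδ, map_mul, map_sub, map_mul, hθδ,
      map_ofNat,
      map_one]
    ring
  rw [this]
  exact Ideal.mul_mem_left _ _ h4

theorem mem_evenOutside_of_sqrt {D : ℤ} (hD : D % 4 = 1) {δ : K} (hδ : δ ^ 2 = D)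
    (htop : Algebra.adjoin F {δ} = ⊤)
    {S : Set (HeightOneSpectrum (𝓞 F))} (hS : ∀ v, (D : 𝓞 F) ∈ v.asIdeal → v ∈ S)  {a : Fˣ}
    (ha : Units.map (algebraMap F K).toMonoidHom a ∈ evenOutside (𝓞 K) K ∅) :
    a ∈ evenOutside (𝓞 F) F S := by
  refine mem_evenOutside.mpr fun v hv => ?_
  obtain ⟨P, hP, hPv⟩ := Ideal.exists_maximal_ideal_liesOver_of_isIntegral (S := 𝓞 K) v.asIdeal
  have hP0 : P ≠ ⊥ := Ideal.ne_bot_of_liesOver_of_ne_bot v.ne_bot P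
  let w : HeightOneSpectrum (𝓞 K) := ⟨P, hP.isPrime, hP0⟩
  have : w.asIdeal.LiesOver v.asIdeal := hPv
  exact even_valuation_of_unramified (w := w)
    (not_sq_dvd_map_of_sqrt hD hδ htop (fun h => hv (hS v h)) w.asIdeal) ha

end ramification

section primesAbove

variable {F : Type*} [Field F] [NumberField F]

theorem finite_primes_above {n : ℕ} (hn : n ≠ 0) :
    {v : HeightOneSpectrum (𝓞 F) | (n : 𝓞 F) ∈ v.asIdeal}.Finite := by
  have h : Ideal.span {(n : 𝓞 F)} ≠ 0 := by simpa using hn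
  refine (Ideal.finite_factors h).subset fun v hv => ?_
  rw [Set.mem_ofPred_eq, Ideal.dvd_span_singleton]
  exact hv

theorem prod_dvd_span {n : ℕ} {S : Finset (HeightOneSpectrum (𝓞 F))}
    (hS : ∀ v ∈ S, (n : 𝓞 F) ∈ v.asIdeal) :
    ∏ v ∈ S, v.asIdeal ∣ Ideal.span {(n : 𝓞 F)} := by
  refine Finset.prod_dvd_of_coprime (fun v _ w _ hvw => ?_) fun v hv =>
    Ideal.dvd_span_singleton.mpr (hS v hv)
  exact Ideal.isCoprime_of_isMaximal fun h => hvw (HeightOneSpectrum.ext h)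

theorem absNorm_span_natCast (n : ℕ) :
    Ideal.absNorm (Ideal.span {(n : 𝓞 F)}) = n ^ Module.finrank ℚ F := by
  rw [Ideal.absNorm_span_singleton, Algebra.norm_natCast, Int.natAbs_pow, Int.natAbs_natCast,
    RingOfIntegers.rank]

theorem prod_absNorm_dvd {n : ℕ} {S : Finset (HeightOneSpectrum (𝓞 F))}
    (hS : ∀ v ∈ S, (n : 𝓞 F) ∈ v.asIdeal) :
    ∏ v ∈ S, Ideal.absNorm v.asIdeal ∣ n ^ Module.finrank ℚ F := by
  rw [← map_prod, ← absNorm_span_natCast]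
  exact map_dvd _ (prod_dvd_span hS)

theorem card_primes_above_mul_le {l m : ℕ} (hl : l.Prime) {S : Finset (HeightOneSpectrum (𝓞 F))}
    (hS : ∀ v ∈ S, (l : 𝓞 F) ∈ v.asIdeal) (hm : ∀ v ∈ S, l ^ m ∣ Ideal.absNorm v.asIdeal) :
    m * S.card ≤ Module.finrank ℚ F := by
  have h : l ^ (m * S.card) ∣ ∏ v ∈ S, Ideal.absNorm v.asIdeal := by
    rw [pow_mul, ← Finset.prod_const]
    exact Finset.prod_dvd_prod_of_dvd _ _ hm
  exact (Nat.pow_dvd_pow_iff_le_right hl.one_lt).mp (h.trans (prod_absNorm_dvd hS))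

theorem span_eq_prod {l m : ℕ} (hl : l.Prime) {S : Finset (HeightOneSpectrum (𝓞 F))}
    (hS : ∀ v ∈ S, (l : 𝓞 F) ∈ v.asIdeal) (hm : ∀ v ∈ S, l ^ m ∣ Ideal.absNorm v.asIdeal)
    (hcard : Module.finrank ℚ F = m * S.card) :
    Ideal.span {(l : 𝓞 F)} = ∏ v ∈ S, v.asIdeal ∧ ∀ v ∈ S, Ideal.absNorm v.asIdeal = l ^ m := by
  have hle {v} (hv : v ∈ S) : l ^ m ≤ Ideal.absNorm v.asIdeal :=
    Nat.le_of_dvd (Nat.pos_of_ne_zero (Ideal.absNorm_eq_zero_iff.not.mpr v.ne_bot)) (hm v hv)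
  have h1 := prod_absNorm_dvd hS
  rw [hcard, pow_mul, ← Finset.prod_const] at h1
  have h2 : ∏ v ∈ S, Ideal.absNorm v.asIdeal = ∏ v ∈ S, l ^ m :=
    Nat.dvd_antisymm h1 (Finset.prod_dvd_prod_of_dvd _ _ hm)
  constructor
  · obtain ⟨J, hJ⟩ := prod_dvd_span hS
    have h3 := congrArg Ideal.absNorm hJ
    rw [absNorm_span_natCast, map_mul, map_prod, h2, hcard, Finset.prod_const, ← pow_mul] at h3
    have h4 : Ideal.absNorm J = 1 :=
      (Nat.eq_of_mul_eq_mul_left (pow_pos hl.pos _) ((mul_one _).trans h3)).symm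
    rw [hJ, Ideal.absNorm_eq_one_iff.mp h4, Ideal.mul_top]
  · intro v hv
    by_contra hne
    exact (Finset.prod_lt_prod (fun _ _ => pow_pos hl.pos m) (fun _ h => hle h)
      ⟨v, hv, lt_of_le_of_ne (hle hv) (Ne.symm hne)⟩).ne h2.symm

theorem absNorm_eq_pow {l : ℕ} (hl : l.Prime) {v : HeightOneSpectrum (𝓞 F)}
    (hv : (l : 𝓞 F) ∈ v.asIdeal) : ∃ f ≠ 0, Ideal.absNorm v.asIdeal = l ^ f := by
  have h := prod_absNorm_dvd (S := {v}) (n := l) (by simpa using hv)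
  rw [Finset.prod_singleton] at h
  obtain ⟨f, -, hf⟩ := (Nat.dvd_prime_pow hl).mp h
  refine ⟨f, ?_, hf⟩
  rintro rfl
  exact v.isPrime.ne_top (Ideal.absNorm_eq_one_iff.mp hf)

theorem sq_dvd_absNorm {l : ℕ} (hl : l.Prime) (hl4 : l % 4 = 3) {i : 𝓞 F} (hi : i ^ 2 = -1)
    {v : HeightOneSpectrum (𝓞 F)} (hv : (l : 𝓞 F) ∈ v.asIdeal) :
    l ^ 2 ∣ Ideal.absNorm v.asIdeal := by
  obtain ⟨f, hf, h⟩ := absNorm_eq_pow hl hv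
  rw [h]
  refine pow_dvd_pow l ?_
  by_contra hlt
  obtain rfl : f = 1 := by omega
  let := Fintype.ofFinite (𝓞 F ⧸ v.asIdeal)
  let := Ideal.Quotient.field v.asIdeal
  have hsq : IsSquare (-1 : 𝓞 F ⧸ v.asIdeal) :=
    ⟨Ideal.Quotient.mk _ i, by rw [← map_mul, ← pow_two, hi, map_neg, map_one]⟩
  rw [FiniteField.isSquare_neg_one_iff] at hsq
  apply hsq
  rw [← Nat.card_eq_fintype_card, ← Submodule.cardQuot_apply, ← Ideal.absNorm_apply, h, pow_one]
  exact hl4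

end primesAbove

section quadraticGenerator

variable {F K : Type*} [Field F] [Field K] [Algebra F K]

theorem add_mul_sqrt_eq_zero {D : F} (hD : ¬ IsSquare D) {δ : K} (hδ : δ ^ 2 = algebraMap F K D)
    {x y : F} (h : algebraMap F K x + algebraMap F K y * δ = 0) : x = 0 ∧ y = 0 := by
  by_cases hy : y = 0
  · subst hy
    simpa using h
  · refine absurd ⟨x / y, ?_⟩ hD
    apply FaithfulSMul.algebraMap_injective F K
    have hy' : algebraMap F K y ≠ 0 := by simpa using hy
    have : δ = -(algebraMap F K x / algebraMap F K y) := by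
      field_simp
      linear_combination h
    rw [← hδ, this, map_mul, map_div₀]
    ring

theorem exists_eq_add_mul_sqrt (h2 : Module.finrank F K = 2) {D : F} (hD : ¬ IsSquare D) {δ : K}
    (hδ : δ ^ 2 = algebraMap F K D) (z : K) :
    ∃ x y : F, z = algebraMap F K x + algebraMap F K y * δ := by
  have hli : LinearIndependent F ![1, δ] := by
    refine LinearIndependent.pair_iff.mpr fun s t h => ?_
    rw [Algebra.smul_def, Algebra.smul_def, mul_one] at h
    exact add_mul_sqrt_eq_zero hD hδ h
  have : Module.Finite F K := Module.finite_of_finrank_pos (by omega)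
  have htop := hli.span_eq_top_of_card_eq_finrank' (by simp [h2])
  have hz : z ∈ Submodule.span F (Set.range ![1, δ]) := htop ▸ Submodule.mem_top
  rw [Matrix.range_cons_cons_empty, Submodule.mem_span_pair] at hz
  obtain ⟨x, y, h⟩ := hz
  exact ⟨x, y, by rw [← h, Algebra.smul_def, Algebra.smul_def, mul_one]⟩

theorem norm_add_mul_sqrt (h2 : Module.finrank F K = 2) {D : F} (hD : ¬ IsSquare D) {δ : K}
    (hδ : δ ^ 2 = algebraMap F K D) (x y : F) :
    Algebra.norm F (algebraMap F K x + algebraMap F K y * δ) = x ^ 2 - D * y ^ 2 := by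
  by_cases hy : y = 0
  · have : Module.Finite F K := Module.finite_of_finrank_pos (by omega)
    simp [hy, Algebra.norm_algebraMap, h2]
  obtain ⟨t, ht⟩ := sq_eq_trace_mul_sub_norm h2 (algebraMap F K x + algebraMap F K y * δ)
  set N := Algebra.norm F (algebraMap F K x + algebraMap F K y * δ)
  have h := add_mul_sqrt_eq_zero hD hδ (x := x ^ 2 + D * y ^ 2 - t * x + N)
    (y := 2 * x * y - t * y) (by
    simp only [map_add, map_sub, map_mul, map_pow, map_ofNat]
    linear_combination ht - algebraMap F K y ^ 2 * hδ)
  have h3 : t = 2 * x := mul_right_cancel₀ hy (by linear_combination -h.2)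
  linear_combination h.1 + x * h3

theorem adjoin_sqrt_eq_top (h2 : Module.finrank F K = 2) {D : F} (hD : ¬ IsSquare D) {δ : K}
    (hδ : δ ^ 2 = algebraMap F K D) : Algebra.adjoin F {δ} = ⊤ := by
  refine eq_top_iff.mpr fun z _ => ?_
  obtain ⟨x, y, rfl⟩ := exists_eq_add_mul_sqrt h2 hD hδ z
  exact add_mem (algebraMap_mem _ x)
    (mul_mem (algebraMap_mem _ y) (Algebra.self_mem_adjoin_singleton F δ))

end quadraticGenerator

section nonnorm

theorem eq_zero_of_sq_eq_exp_mul_sq {a b : WithZero (Multiplicative ℤ)}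
    (h : a ^ 2 = WithZero.exp (-1) * b ^ 2) : b = 0 := by
  by_contra hb
  have h1 := congrArg WithZero.log h
  rw [WithZero.log_mul WithZero.exp_ne_zero (pow_ne_zero 2 hb), WithZero.log_pow, WithZero.log_pow,
    WithZero.log_exp, nsmul_eq_mul, nsmul_eq_mul] at h1
  push_cast at h1
  omega

variable {R F : Type*} [CommRing R] [IsDedekindDomain R] [Field F] [Algebra R F]
    [IsFractionRing R F]

theorem isSquare_mk_of_eq_sq_sub_mul_sq {v : HeightOneSpectrum R} {D : R} (hD : D ∈ v.asIdeal)
    (hD2 : D ∉ v.asIdeal ^ 2) {ε : R} (hε : ε ∉ v.asIdeal) {x y : F}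
    (h : algebraMap R F ε = x ^ 2 - algebraMap R F D * y ^ 2) :
    IsSquare (Ideal.Quotient.mk v.asIdeal ε) := by
  have hvε : v.valuation F (algebraMap R F ε) = 1 :=
    (HeightOneSpectrum.valuation_eq_one_iff_notMem v).mpr hε
  have hvD : v.valuation F (algebraMap R F D) = WithZero.exp (-1) := by
    have h1 := (v.intValuation_le_pow_iff_mem D 1).mpr (by rwa [pow_one])
    have h2 := (v.intValuation_le_pow_iff_mem D 2).not.mpr hD2
    have h0 : v.intValuation D ≠ 0 := fun h0 => h2 (h0 ▸ zero_le)
    rw [HeightOneSpectrum.valuation_of_algebraMap]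
    rw [← WithZero.exp_log h0, WithZero.exp_le_exp] at h1 h2
    rw [← WithZero.exp_log h0]
    congr 1
    push_cast at h1 h2
    omega
  have hmul : v.valuation F (algebraMap R F D * y ^ 2) =
      WithZero.exp (-1) * v.valuation F y ^ 2 := by rw [map_mul, map_pow, hvD]
  have hne : v.valuation F (x ^ 2) ≠ v.valuation F (-(algebraMap R F D * y ^ 2)) := by
    intro h0
    rw [Valuation.map_neg, hmul, map_pow] at h0
    have hy0 := eq_zero_of_sq_eq_exp_mul_sq h0
    rw [hy0] at h0
    simp only [ne_eq, OfNat.ofNat_ne_zero, not_false_eq_true, zero_pow, mul_zero,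
      pow_eq_zero_iff, map_eq_zero] at h0 hy0
    rw [h, h0, hy0] at hvε
    simp at hvε
  rw [h, sub_eq_add_neg, Valuation.map_add_of_distinct_val _ hne, Valuation.map_neg] at hvε
  have hy1 : v.valuation F (algebraMap R F D * y ^ 2) < 1 := by
    refine lt_of_le_of_ne (hvε ▸ le_max_right _ _) fun h1 => ?_
    rw [hmul] at h1
    have := eq_zero_of_sq_eq_exp_mul_sq ((one_pow 2).trans h1.symm)
    rw [this] at h1
    simp at h1
  have hx1 : v.valuation F x ≤ 1 := by
    rw [← pow_le_one_iff_of_nonneg zero_le two_ne_zero, ← map_pow]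
    exact hvε ▸ le_max_left _ _
  obtain ⟨a, b, hab⟩ := v.exists_primeCompl_mul_eq_of_integer x hx1
  have hmem : a ^ 2 - ε * b ^ 2 ∈ v.asIdeal := by
    refine (HeightOneSpectrum.valuation_lt_one_iff_mem (K := F) v _).mp ?_
    change v.valuation F (algebraMap R F _) < 1
    have : algebraMap R F (a ^ 2 - ε * b ^ 2) =
        (algebraMap R F D * y ^ 2) * algebraMap R F (b ^ 2) := by
      simp only [map_sub, map_mul, map_pow, ← hab, h]
      ring
    rw [this, map_mul]
    exact mul_lt_one_of_lt_of_le hy1 (v.valuation_le_one _)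
  let := Ideal.Quotient.field v.asIdeal
  have hb : Ideal.Quotient.mk v.asIdeal (b : R) ≠ 0 := by
    rw [Ne, Ideal.Quotient.eq_zero_iff_mem]
    exact b.2
  refine ⟨Ideal.Quotient.mk _ a / Ideal.Quotient.mk _ (b : R), ?_⟩
  rw [← Ideal.Quotient.eq_zero_iff_mem, map_sub, map_mul, map_pow, map_pow, sub_eq_zero] at hmem
  field_simp
  exact hmem.symm

end nonnorm

section step

variable {F K : Type*} [Field F] [Field K] [Algebra F K] [NumberField F] [NumberField K]

theorem isPrimitiveRoot_four_of_sq_eq_neg_one {i : F} (hi : i ^ 2 = -1) :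
    IsPrimitiveRoot i (2 ^ 2) := by
  have : Fact (Nat.Prime 2) := ⟨Nat.prime_two⟩
  rw [IsPrimitiveRoot.iff_orderOf]
  refine orderOf_eq_prime_pow ?_ ?_
  · rw [pow_one, hi]
    norm_num
  · rw [pow_succ, pow_mul, pow_one, hi]
    norm_num

theorem two_mul_card_infinitePlace {i : F} (hi : i ^ 2 = -1) :
    2 * Fintype.card (InfinitePlace F) = Module.finrank ℚ F := by
  have h := InfinitePlace.card_add_two_mul_card_eq_rank F
  rw [InfinitePlace.card_eq_nrRealPlaces_add_nrComplexPlaces, ← h,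
    InfinitePlace.IsPrimitiveRoot.nrRealPlaces_eq_zero_of_two_lt (by norm_num)
      (isPrimitiveRoot_four_of_sq_eq_neg_one hi), zero_add, zero_add]

theorem notMem_sq_of_span_eq_prod {a : 𝓞 F} {S : Finset (HeightOneSpectrum (𝓞 F))}
    (h : Ideal.span {a} = ∏ v ∈ S, v.asIdeal) {v : HeightOneSpectrum (𝓞 F)} (hv : v ∈ S) :
    a ∉ v.asIdeal ^ 2 := by
  classical
  rw [← Ideal.dvd_span_singleton, h, ← Finset.mul_prod_erase _ _ hv, pow_two]
  intro hdvd
  obtain ⟨w, hw, hvw⟩ := (v.prime.dvd_finsetProd_iff _).mp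
    ((mul_dvd_mul_iff_left v.prime.ne_zero).mp hdvd)
  refine Finset.ne_of_mem_erase hw (HeightOneSpectrum.ext ?_)
  exact w.isMaximal.eq_of_le v.isPrime.ne_top (Ideal.le_of_dvd hvw)

/-- Adjoining the square root of a discriminant `D = ± l` preserves oddness of the class number
when at most two primes lie above `l`, provided that some unit is not a square modulo these primes
if there are exactly two of them. -/
theorem odd_classNumber_of_sqrt (h2 : Module.finrank F K = 2) {D : ℤ} (hD4 : D % 4 = 1) {l : ℕ}
    (hl : l.Prime) (hDl : D.natAbs = l) {δ : K} (hδ : δ ^ 2 = D) (hD : ¬ IsSquare (D : F))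
    {i : F} (hi : i ^ 2 = -1) (hF : Odd (classNumber F)) {m : ℕ}
    (hm : ∀ v : HeightOneSpectrum (𝓞 F), (l : 𝓞 F) ∈ v.asIdeal → l ^ m ∣ Ideal.absNorm v.asIdeal)
    (hn : Module.finrank ℚ F < 2 * m ∨ Module.finrank ℚ F = 2 * m ∧ ∃ ε : (𝓞 F)ˣ,
      ∀ v : HeightOneSpectrum (𝓞 F), (l : 𝓞 F) ∈ v.asIdeal → Ideal.absNorm v.asIdeal = l ^ m →
        ¬ IsSquare (Ideal.Quotient.mk v.asIdeal (ε : 𝓞 F))) :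
    Odd (classNumber K) := by
  have hmem (I : Ideal (𝓞 F)) : (D : 𝓞 F) ∈ I ↔ (l : 𝓞 F) ∈ I := by
    obtain h | h := Int.natAbs_eq D <;> rw [h, hDl] <;> simp
  have hδ' : δ ^ 2 = algebraMap F K D := by rw [hδ, map_intCast]
  set S := (finite_primes_above (F := F) hl.ne_zero).toFinset with hSdef
  have hS (v : HeightOneSpectrum (𝓞 F)) : v ∈ S ↔ (l : 𝓞 F) ∈ v.asIdeal := by simp [hSdef]
  have hSl : ∀ v ∈ S, (l : 𝓞 F) ∈ v.asIdeal := fun v => (hS v).mp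
  have hSm : ∀ v ∈ S, l ^ m ∣ Ideal.absNorm v.asIdeal := fun v hv => hm v (hSl v hv)
  have hcard := card_primes_above_mul_le hl hSl hSm
  have hn0 : 0 < Module.finrank ℚ F := Module.finrank_pos
  have hplaces : Fintype.card (InfinitePlace K) = 2 * Fintype.card (InfinitePlace F) := by
    have h1 := two_mul_card_infinitePlace hi
    have h3 := two_mul_card_infinitePlace (F := K) (i := algebraMap F K i)
      (by rw [← map_pow, hi, map_neg, map_one])
    have h4 := Module.finrank_mul_finrank ℚ F K
    rw [h2] at h4
    omega
  refine odd_classNumber_of_quadratic h2 hplaces hF S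
    (fun a => mem_evenOutside_of_sqrt hD4 hδ (adjoin_sqrt_eq_top h2 hD hδ')
      fun v hv => (hS v).mpr ((hmem _).mp hv))
    (Units.mk0 (D : F) fun h => hD (h ▸ IsSquare.zero)) hD ⟨δ, by simp [← pow_two, hδ]⟩ ?_
  obtain hn | ⟨hn, ε, hε⟩ := hn
  · left
    by_contra hlt
    have := Nat.mul_le_mul_left m (show 2 ≤ S.card by omega)
    omega
  have hle : S.card ≤ 2 := by
    by_contra hlt
    have := Nat.mul_le_mul_left m (show 3 ≤ S.card by omega)
    omega
  rw [or_iff_not_imp_left]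
  refine fun hlt => ⟨hle, ε, fun x hx => ?_⟩
  have hS2 : S.card = 2 := by omega
  obtain ⟨hprod, hnorm⟩ := span_eq_prod hl hSl hSm (by rw [hS2, hn, mul_comm])
  obtain ⟨v, hv⟩ : S.Nonempty := Finset.card_pos.mp (by omega)
  obtain ⟨a, b, rfl⟩ := exists_eq_add_mul_sqrt h2 hD hδ' x
  rw [norm_add_mul_sqrt h2 hD hδ'] at hx
  refine hε v (hSl v hv) (hnorm v hv) (isSquare_mk_of_eq_sq_sub_mul_sq (D := (D : 𝓞 F)) (x := a)
    (y := b) ((hmem _).mpr (hSl v hv)) ?_ ?_ ?_)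
  · rw [hmem]
    exact notMem_sq_of_span_eq_prod hprod hv
  · exact fun h => v.isPrime.ne_top (Ideal.eq_top_of_isUnit_mem _ h ε.isUnit)
  · rw [map_intCast, hx]

end step

section gaussian

theorem not_isSquare_neg_one_rat : ¬ IsSquare (-1 : ℚ) := by
  rintro ⟨r, hr⟩
  nlinarith [mul_self_nonneg r]

theorem odd_classNumber_gaussian {F : Type*} [Field F] [NumberField F]
    (h2 : Module.finrank ℚ F = 2) {i : F} (hi : i ^ 2 = -1) : Odd (classNumber F) := by
  have hsq := not_isSquare_neg_one_rat
  have hprim := isPrimitiveRoot_four_of_sq_eq_neg_one hi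
  have : IsCyclotomicExtension {2 ^ 2} ℚ F := by
    refine (IsCyclotomicExtension.iff_singleton _ _ _).mpr ⟨⟨i, hprim⟩, fun x => ?_⟩
    have hx : x ∈ Algebra.adjoin ℚ {i} :=
      adjoin_sqrt_eq_top h2 hsq (δ := i) (by simp [hi]) ▸ Algebra.mem_top
    refine Algebra.adjoin_mono ?_ hx
    rw [Set.singleton_subset_iff, Set.mem_ofPred_eq]
    exact hprim.pow_eq_one
  have : IsPrincipalIdealRing (𝓞 F) := by
    apply RingOfIntegers.isPrincipalIdealRing_of_abs_discr_lt
    have hc : InfinitePlace.nrComplexPlaces F = 1 := by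
      rw [IsCyclotomicExtension.Rat.nrComplexPlaces_eq_totient_div_two (2 ^ 2) F]
      decide
    have : Fact (Nat.Prime 2) := ⟨Nat.prime_two⟩
    have hd : discr F = -4 := by
      rw [IsCyclotomicExtension.Rat.discr_prime_pow 2 2 F]
      norm_num [show Nat.totient 4 = 2 by decide]
    rw [h2, hc, hd]
    have := Real.pi_gt_three
    norm_num
    nlinarith
  rw [classNumber_eq_one_iff.mpr this]
  exact odd_one

end gaussian

section pell

theorem eq_sq_of_isCoprime {a b c : ℤ} (h : IsCoprime a b) (ha : 0 ≤ a) (heq : a * b = c ^ 2) :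
    ∃ d, a = d ^ 2 := by
  obtain ⟨d, hd | hd⟩ := Int.sq_of_isCoprime h heq
  · exact ⟨d, hd⟩
  · exact ⟨0, by nlinarith [sq_nonneg d]⟩

theorem exists_sq_of_mul_eq_prime_mul_sq {p : ℕ} (hp : p.Prime) {a b y : ℤ} (h : IsCoprime a b)
    (ha : 0 ≤ a) (hb : 0 ≤ b) (heq : a * b = p * y ^ 2) :
    ∃ s t : ℤ, a = p * s ^ 2 ∧ b = t ^ 2 ∨ a = t ^ 2 ∧ b = p * s ^ 2 := by
  wlog hpa : (p : ℤ) ∣ a generalizing a b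
  · have hpb : (p : ℤ) ∣ b :=
      ((Nat.prime_iff_prime_int.mp hp).dvd_or_dvd ⟨y ^ 2, heq⟩).resolve_left hpa
    obtain ⟨s, t, hst⟩ := this h.symm hb ha (by rw [mul_comm, heq]) hpb
    exact ⟨s, t, by tauto⟩
  obtain ⟨r, rfl⟩ := hpa
  have hp0 : (0 : ℤ) < p := by exact_mod_cast hp.pos
  have hr : 0 ≤ r := nonneg_of_mul_nonneg_right ha hp0
  have heq' : r * b = y ^ 2 := mul_left_cancel₀ hp0.ne' (by rw [← heq]; ring)
  have hrb : IsCoprime r b := h.of_mul_left_right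
  obtain ⟨s, hs⟩ := eq_sq_of_isCoprime hrb hr heq'
  obtain ⟨t, ht⟩ := eq_sq_of_isCoprime hrb.symm hb (by rw [mul_comm, heq'])
  exact ⟨s, t, Or.inl ⟨by rw [hs], ht⟩⟩

theorem exists_sq_sub_prime_mul_sq {p : ℕ} (hp : p.Prime) :
    ∃ x y : ℤ, x ^ 2 - p * y ^ 2 = -1 ∨ x ^ 2 - p * y ^ 2 = 2 ∨ x ^ 2 - p * y ^ 2 = -2 := by
  have hp0 : (0 : ℤ) < p := by exact_mod_cast hp.pos
  obtain ⟨a, ha⟩ := Pell.IsFundamental.exists_of_not_isSquare hp0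
    (Nat.prime_iff_prime_int.mp hp).not_isSquare
  obtain ⟨h1, h2, hmin⟩ := ha
  have heq := a.prop
  set X := a.x
  set Y := a.y
  obtain ⟨u, hu⟩ | ⟨u, hu⟩ := Int.even_or_odd X
  · obtain ⟨s, t, hst⟩ := exists_sq_of_mul_eq_prime_mul_sq hp (a := X - 1) (b := X + 1) (y := Y)
      ⟨u, 1 - u, by rw [hu]; ring⟩ (by omega) (by omega) (by linear_combination heq)
    refine ⟨t, s, Or.inr ?_⟩
    obtain ⟨h3, h4⟩ | ⟨h3, h4⟩ := hst
    · left
      linear_combination h3 - h4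
    · right
      linear_combination h4 - h3
  · have hY : Even Y := by
      have h3 : (p : ℤ) * Y ^ 2 = 4 * (u * (u + 1)) := by
        rw [hu] at heq
        linear_combination -heq
      by_contra hY
      obtain ⟨w, hw⟩ := Int.not_even_iff_odd.mp hY
      rw [hw] at h3
      have h4 : (p : ℤ) = 4 * (u * (u + 1) - p * (w ^ 2 + w)) := by linear_combination h3
      have h5 : 4 ∣ p := by exact_mod_cast Dvd.intro _ h4.symm
      have h6 := (Nat.prime_dvd_prime_iff_eq Nat.prime_two hp).mp ((by norm_num : 2 ∣ 4).trans h5)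
      rw [← h6] at h5
      omega
    obtain ⟨w, hw⟩ := hY
    obtain ⟨s, t, hst⟩ := exists_sq_of_mul_eq_prime_mul_sq hp (a := u) (b := u + 1) (y := w)
      ⟨-1, 1, by ring⟩ (by omega) (by omega) (by
        rw [hu, hw] at heq
        exact mul_left_cancel₀ (four_ne_zero' ℤ) (by linear_combination heq))
    refine ⟨t, s, Or.inl ?_⟩
    obtain ⟨h3, h4⟩ | ⟨h3, h4⟩ := hst
    · exfalso
      have hsol : |t| ^ 2 - p * s ^ 2 = 1 := by
        rw [sq_abs]
        linear_combination h3 - h4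
      have ht1 : 1 < |t| := by
        refine (one_lt_sq_iff₀ (abs_nonneg t)).mp ?_
        rw [sq_abs]
        omega
      have := hmin (b := Pell.Solution₁.mk |t| s hsol) ht1
      rw [Pell.Solution₁.x_mk] at this
      nlinarith [sq_abs t]
    · linear_combination h4 - h3

theorem exists_sq_sub_prime_mul_sq_eq_neg_one {p : ℕ} (hp : p.Prime) (hp4 : p % 4 = 1) :
    ∃ x y : ℤ, x ^ 2 - p * y ^ 2 = -1 := by
  obtain ⟨x, y, h⟩ := exists_sq_sub_prime_mul_sq hp
  have hp1 : (p : ZMod 4) = 1 := by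
    rw [← ZMod.natCast_mod, hp4, Nat.cast_one]
  have hmod : ∀ x y : ZMod 4, x ^ 2 - y ^ 2 ≠ 2 ∧ x ^ 2 - y ^ 2 ≠ -2 := by decide
  refine ⟨x, y, h.resolve_right ?_⟩
  rintro (h | h)
  · exact (hmod x y).1 (by simpa [hp1] using congrArg (Int.cast : ℤ → ZMod 4) h)
  · exact (hmod x y).2 (by simpa [hp1] using congrArg (Int.cast : ℤ → ZMod 4) h)

theorem exists_sq_sub_prime_mul_sq_eq_neg_two {p : ℕ} (hp : p.Prime) (hp8 : p % 8 = 3) :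
    ∃ x y : ℤ, x ^ 2 - p * y ^ 2 = -2 := by
  obtain ⟨x, y, h⟩ := exists_sq_sub_prime_mul_sq hp
  have hp3 : (p : ZMod 8) = 3 := by
    rw [← ZMod.natCast_mod, hp8, Nat.cast_ofNat]
  have hmod : ∀ x y : ZMod 8, x ^ 2 - 3 * y ^ 2 ≠ -1 ∧ x ^ 2 - 3 * y ^ 2 ≠ 2 := by decide
  obtain h | h | h := h
  · exact absurd (by simpa [hp3] using congrArg (Int.cast : ℤ → ZMod 8) h) (hmod x y).1
  · exact absurd (by simpa [hp3] using congrArg (Int.cast : ℤ → ZMod 8) h) (hmod x y).2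
  · exact ⟨x, y, h⟩

end pell

section residueField

variable {k : Type*} [Field k] [Finite k]

theorem not_isSquare_of_sq_eq_neg_one {p : ℕ} (hp : p % 8 = 5) (hcard : Nat.card k = p)
    (h2 : (2 : k) ≠ 0) {x : k} (hx : x ^ 2 = -1) : ¬ IsSquare x := by
  rintro ⟨y, rfl⟩
  have hy : y ≠ 0 := by
    rintro rfl
    simp at hx
  obtain ⟨j, rfl⟩ : ∃ j, p = 8 * j + 5 := ⟨p / 8, by omega⟩
  have := Fintype.ofFinite k
  have h1 := FiniteField.pow_card_sub_one_eq_one y hy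
  rw [← Nat.card_eq_fintype_card, hcard,
    show y ^ (8 * j + 5 - 1) = ((y * y) ^ 2) ^ (2 * j + 1) by
      rw [show 8 * j + 5 - 1 = 4 * (2 * j + 1) by omega]; ring,
    hx, Odd.neg_one_pow ⟨j, rfl⟩] at h1
  exact h2 (by linear_combination -h1)

theorem not_isSquare_of_pow_succ_eq_neg_one {q : ℕ} (hq : q % 4 = 3)
    (hcard : Nat.card k = q ^ 2) (h2 : (2 : k) ≠ 0) {x : k} (hx : x ^ (q + 1) = -1) :
    ¬ IsSquare x := by
  rintro ⟨y, rfl⟩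
  have hy : y ≠ 0 := by
    rintro rfl
    simp at hx
  obtain ⟨j, rfl⟩ : ∃ j, q = 4 * j + 3 := ⟨q / 4, by omega⟩
  have := Fintype.ofFinite k
  have h1 := FiniteField.pow_card_sub_one_eq_one y hy
  rw [← Nat.card_eq_fintype_card, hcard,
    show y ^ ((4 * j + 3) ^ 2 - 1) = ((y * y) ^ (4 * j + 3 + 1)) ^ (2 * j + 1) by
      rw [← pow_two, ← pow_mul, ← pow_mul]
      congr 1
      rw [Nat.sub_eq_iff_eq_add (Nat.pow_pos (by omega))]
      ring,
    hx, Odd.neg_one_pow ⟨j, rfl⟩] at h1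
  exact h2 (by linear_combination -h1)

omit [Finite k] in
theorem pow_eq_neg_of_sq_eq {q : ℕ} [Fact q.Prime] [CharP k q] (hq : q % 2 = 1) {n : ℤ}
    (hn : jacobiSym n q = -1) {S : k} (hS : S ^ 2 = n) : S ^ q = -S := by
  rw [← jacobiSym.legendreSym.to_jacobiSym] at hn
  have h := legendreSym.eq_pow q n
  rw [hn] at h
  have h1 := congrArg (ZMod.castHom dvd_rfl k) h
  rw [map_pow, map_intCast, map_intCast, ← hS, ← pow_mul] at h1
  conv_lhs => rw [← Nat.div_add_mod q 2, hq, pow_succ, ← h1]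
  simp

omit [Finite k] in
theorem pow_eq_neg_of_sq_eq_neg_one {q : ℕ} (hq : q % 4 = 3) {I : k} (hI : I ^ 2 = -1) :
    I ^ q = -I := by
  conv_lhs => rw [← Nat.div_add_mod q 4, hq, pow_add, pow_mul, show I ^ 4 = (I ^ 2) ^ 2 by ring, hI]
  rw [show I ^ 3 = I ^ 2 * I by ring, hI]
  simp

variable {p q : ℕ} (hq : q.Prime) (hq4 : q % 4 = 3) (hpq : jacobiSym p q = -1)
  (hcard : Nat.card k = q ^ 2) (hqk : (q : k) = 0) {S : k} (hS : S ^ 2 = p) {a b : ℤ}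

include hq hq4 hpq hcard hqk hS

theorem not_isSquare_add_mul (hab : a ^ 2 - p * b ^ 2 = -1) : ¬ IsSquare (a + b * S) := by
  have : Fact q.Prime := ⟨hq⟩
  have : CharP k q := (CharP.charP_iff_prime_eq_zero hq).mpr hqk
  have h2 : (2 : k) ≠ 0 := Ring.two_ne_zero (by
    rw [ringChar.eq k q]
    omega)
  refine not_isSquare_of_pow_succ_eq_neg_one hq4 hcard h2 ?_
  have hab' : (a : k) ^ 2 - p * b ^ 2 = -1 := by exact_mod_cast congrArg (Int.cast : ℤ → k) hab
  have hfrob : (a + b * S) ^ q = a - b * S := by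
    rw [← frobenius_def, map_add, map_mul, map_intCast, map_intCast, frobenius_def,
      pow_eq_neg_of_sq_eq (by omega) hpq (by simpa using hS)]
    ring
  rw [pow_succ, hfrob]
  linear_combination hab' - b ^ 2 * hS

theorem not_isSquare_of_two_mul_eq (hab : a ^ 2 - p * b ^ 2 = -2) {I : k} (hI : I ^ 2 = -1)
    {x : k} (hx : 2 * x = (a + b * S) * (1 + I)) : ¬ IsSquare x := by
  have : Fact q.Prime := ⟨hq⟩
  have : CharP k q := (CharP.charP_iff_prime_eq_zero hq).mpr hqk
  have h2 : (2 : k) ≠ 0 := Ring.two_ne_zero (by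
    rw [ringChar.eq k q]
    omega)
  refine not_isSquare_of_pow_succ_eq_neg_one hq4 hcard h2 ?_
  have hab' : (a : k) ^ 2 - p * b ^ 2 = -2 := by exact_mod_cast congrArg (Int.cast : ℤ → k) hab
  have hfrob : 2 * x ^ q = (a - b * S) * (1 - I) := by
    have h := congrArg (frobenius k q) hx
    rw [map_mul, map_mul, map_add, map_add, map_mul, map_one, map_intCast, map_intCast,
      map_ofNat] at h
    simp only [frobenius_def] at h
    rw [pow_eq_neg_of_sq_eq (S := S) (by omega) hpq (by simpa using hS),
      pow_eq_neg_of_sq_eq_neg_one hq4 hI] at h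
    rw [h]
    ring
  rw [pow_succ]
  refine mul_left_cancel₀ (mul_ne_zero h2 h2) ?_
  calc 2 * 2 * (x ^ q * x) = (2 * x ^ q) * (2 * x) := by ring
    _ = (a ^ 2 - b ^ 2 * S ^ 2) * (1 - I ^ 2) := by rw [hfrob, hx]; ring
    _ = 2 * 2 * -1 := by rw [hS, hI]; linear_combination 2 * hab'

end residueField

section units

variable {F : Type*} [Field F] [NumberField F] {p : ℕ} {a b : ℤ}

omit [NumberField F] in
theorem exists_unit_eq_add_mul {s : 𝓞 F} (hs : s ^ 2 = p) (hab : a ^ 2 - p * b ^ 2 = -1) :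
    ∃ ε : (𝓞 F)ˣ, (ε : 𝓞 F) = a + b * s := by
  have hab' : (a : 𝓞 F) ^ 2 - p * b ^ 2 = -1 := by
    exact_mod_cast congrArg (Int.cast : ℤ → 𝓞 F) hab
  exact ⟨Units.mkOfMulEqOne (a + b * s) (b * s - a) (by linear_combination b ^ 2 * hs - hab'), rfl⟩

theorem exists_two_mul_eq {s i : 𝓞 F} (hs : s ^ 2 = p) (hi : i ^ 2 = -1)
    (hab : a ^ 2 - p * b ^ 2 = -2) : ∃ e : 𝓞 F, 2 * e = (a + b * s) * (1 + i) := by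
  have hab' : (a : F) ^ 2 - p * b ^ 2 = -2 := by exact_mod_cast congrArg (Int.cast : ℤ → F) hab
  have hs' : (s : F) ^ 2 = p := by exact_mod_cast congrArg (algebraMap (𝓞 F) F) hs
  have hi' : (i : F) ^ 2 = -1 := by exact_mod_cast congrArg (algebraMap (𝓞 F) F) hi
  set e : F := (a + b * s) * (1 + i) / 2 with he
  have hint : IsIntegral ℤ e := by
    refine IsIntegral.of_pow two_pos ?_
    have : e ^ 2 = ((i * (a ^ 2 + 1 + a * b * s) : 𝓞 F) : F) := by
      simp only [map_add, map_mul, map_pow, map_one, map_intCast]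
      rw [he]
      linear_combination
        (a + b * s : F) ^ 2 / 4 * hi' + (i : F) * b ^ 2 / 2 * hs' - (i : F) / 2 * hab'
    rw [this]
    exact RingOfIntegers.isIntegral_coe _
  obtain ⟨x, hx⟩ : ∃ x : 𝓞 F, algebraMap (𝓞 F) F x = e := ⟨⟨e, hint⟩, rfl⟩
  refine ⟨x, RingOfIntegers.ext ?_⟩
  simp only [map_add, map_mul, map_one, map_intCast, map_ofNat]
  rw [hx, he]
  ring

theorem exists_unit_two_mul_eq {s i : 𝓞 F} (hs : s ^ 2 = p) (hi : i ^ 2 = -1)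
    (hab : a ^ 2 - p * b ^ 2 = -2) : ∃ ε : (𝓞 F)ˣ, 2 * (ε : 𝓞 F) = (a + b * s) * (1 + i) := by
  obtain ⟨e, he⟩ := exists_two_mul_eq hs hi hab
  obtain ⟨e', he'⟩ := exists_two_mul_eq (s := -s) (i := -i) (by rw [neg_sq, hs])
    (by rw [neg_sq, hi]) hab
  have hab' : (a : 𝓞 F) ^ 2 - p * b ^ 2 = -2 := by
    exact_mod_cast congrArg (Int.cast : ℤ → 𝓞 F) hab
  refine ⟨Units.mkOfMulEqOne e (-e') ?_, he⟩
  refine mul_left_cancel₀ (by norm_num : (4 : 𝓞 F) ≠ 0) ?_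
  calc 4 * (e * -e') = - ((2 * e) * (2 * e')) := by ring
    _ = - ((a ^ 2 - b ^ 2 * s ^ 2) * (1 - i ^ 2)) := by rw [he, he']; ring
    _ = 4 * 1 := by rw [hs, hi]; linear_combination -2 * hab'

end units

section adjoinSqrt

theorem finrank_adjoin_sqrt {F E : Type*} [Field F] [Field E] [Algebra F E] {D : F}
    (hD : ¬ IsSquare D) {δ : E} (hδ : δ ^ 2 = algebraMap F E D) :
    Module.finrank F F⟮δ⟯ = 2 := by
  have hirr : Irreducible (Polynomial.X ^ 2 - Polynomial.C D) :=
    X_pow_sub_C_irreducible_of_prime Nat.prime_two fun b hb => hD ⟨b, by rw [← hb, pow_two]⟩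
  have hmonic := Polynomial.monic_X_pow_sub_C D two_ne_zero
  rw [IntermediateField.adjoin.finrank ⟨_, hmonic, by simp [hδ]⟩,
    ← minpoly.eq_of_irreducible_of_monic hirr (by simp [hδ]) hmonic,
    Polynomial.natDegree_X_pow_sub_C]

variable {F K : Type*} [Field F] [Field K] [Algebra F K]

theorem isSquare_or_isSquare_mul [CharZero F] (h2 : Module.finrank F K = 2) {D : F}
    (hD : ¬ IsSquare D) {δ : K} (hδ : δ ^ 2 = algebraMap F K D) {c : F}
    (hc : IsSquare (algebraMap F K c)) : IsSquare c ∨ IsSquare (D * c) := by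
  obtain ⟨z, hz⟩ := hc
  obtain ⟨x, y, rfl⟩ := exists_eq_add_mul_sqrt h2 hD hδ z
  have h := add_mul_sqrt_eq_zero hD hδ (x := x ^ 2 + D * y ^ 2 - c) (y := 2 * x * y) (by
    simp only [map_add, map_sub, map_mul, map_pow, map_ofNat]
    linear_combination -hz - algebraMap F K y ^ 2 * hδ)
  obtain hx | rfl : x = 0 ∨ y = 0 := by simpa [or_assoc] using h.2
  · right
    exact ⟨D * y, by rw [hx] at h; linear_combination -D * h.1⟩
  · left
    exact ⟨x, by linear_combination -h.1⟩

theorem not_isSquare_cast_gaussian [CharZero F] (h2 : Module.finrank ℚ F = 2) {i : F}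
    (hi : i ^ 2 = -1) {n : ℕ} (hn : ¬ IsSquare n) : ¬ IsSquare (n : F) := by
  have hneg := not_isSquare_neg_one_rat
  intro h
  obtain h | ⟨r, hr⟩ := isSquare_or_isSquare_mul h2 hneg (δ := i) (by simp [hi]) (c := (n : ℚ))
    (by simpa using h)
  · exact hn (Rat.isSquare_natCast_iff.mp h)
  · obtain rfl : n = 0 := by
      have : (n : ℚ) = 0 := by linarith [mul_self_nonneg r, Nat.cast_nonneg (α := ℚ) n]
      exact_mod_cast this
    exact hn IsSquare.zero

theorem not_isSquare_mul_of_prime {p q : ℕ} (hp : p.Prime) (hq : q.Prime) (hpq : p ≠ q) :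
    ¬ IsSquare (p * q) := by
  rintro ⟨r, hr⟩
  obtain ⟨t, rfl⟩ : p ∣ r := by
    have : p ∣ r * r := hr ▸ dvd_mul_right p q
    simpa using hp.dvd_mul.mp this
  have hq' : q = p * (t * t) := Nat.eq_of_mul_eq_mul_left hp.pos (by rw [hr]; ring)
  exact hpq ((Nat.prime_dvd_prime_iff_eq hp hq).mp ⟨_, hq'⟩)

end adjoinSqrt

section tower

theorem exists_integer_sq_eq {F : Type*} [Field F] {x : F} {n : ℤ} (hx : x ^ 2 = n) :
    ∃ y : 𝓞 F, y ^ 2 = n := by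
  have hint : IsIntegral ℤ x := IsIntegral.of_pow two_pos (hx ▸ isIntegral_algebraMap)
  obtain ⟨y, hy⟩ : ∃ y : 𝓞 F, algebraMap (𝓞 F) F y = x := ⟨⟨x, hint⟩, rfl⟩
  refine ⟨y, FaithfulSMul.algebraMap_injective (𝓞 F) F ?_⟩
  rw [map_pow, hy, hx, map_intCast]

variable {F K : Type*} [Field F] [Field K] [Algebra F K]

theorem natCast_eq_zero_residue {l : ℕ} {v : HeightOneSpectrum (𝓞 F)} (hv : (l : 𝓞 F) ∈ v.asIdeal) :
    (l : 𝓞 F ⧸ v.asIdeal) = 0 := by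
  rw [← map_natCast (Ideal.Quotient.mk v.asIdeal)]
  exact Ideal.Quotient.eq_zero_iff_mem.mpr hv

theorem not_isSquare_neg {i : F} (hi : i ^ 2 = -1) {n : ℕ} (hn : ¬ IsSquare (n : F)) :
    ¬ IsSquare ((-n : ℤ) : F) := by
  rintro ⟨x, hx⟩
  refine hn ⟨i * x, ?_⟩
  push_cast at hx
  linear_combination -hx - x ^ 2 * hi

variable [NumberField F] [NumberField K]

theorem odd_classNumber_adjoin_sqrt_gaussian (hF : Module.finrank ℚ F = 2)
    (h2 : Module.finrank F K = 2) {i : F} (hi : i ^ 2 = -1) {p : ℕ} (hp : p.Prime)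
    (hp8 : p % 8 = 5 ∨ p % 8 = 3) {s : K} (hs : s ^ 2 = p) (hD : ¬ IsSquare (p : F)) :
    Odd (classNumber K) := by
  have hodd := odd_classNumber_gaussian hF hi
  obtain ⟨j, hj⟩ := exists_integer_sq_eq (n := -1) (by simpa using hi)
  rw [Int.cast_neg, Int.cast_one] at hj
  obtain hp8 | hp8 := hp8
  · refine odd_classNumber_of_sqrt h2 (D := p) (by omega) hp (Int.natAbs_natCast p) (δ := s)
      (by simpa using hs) (by simpa using hD) hi hodd (m := 1) ?_ (Or.inr ⟨by rw [hF], ?_⟩)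
    · intro v hv
      obtain ⟨f, hf, h⟩ := absNorm_eq_pow hp hv
      exact h ▸ pow_dvd_pow p (Nat.one_le_iff_ne_zero.mpr hf)
    · refine ⟨Units.mkOfMulEqOne j (-j) (by linear_combination -hj), fun v hv hnorm => ?_⟩
      let := Ideal.Quotient.field v.asIdeal
      have : Fact p.Prime := ⟨hp⟩
      have : CharP (𝓞 F ⧸ v.asIdeal) p :=
        (CharP.charP_iff_prime_eq_zero hp).mpr (natCast_eq_zero_residue hv)
      refine not_isSquare_of_sq_eq_neg_one hp8 ?_ (Ring.two_ne_zero ?_) ?_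
      · rw [← Submodule.cardQuot_apply, ← Ideal.absNorm_apply, hnorm, pow_one]
      · rw [ringChar.eq _ p]
        omega
      · rw [← map_pow, Units.val_mkOfMulEqOne, hj, map_neg, map_one]
  · refine odd_classNumber_of_sqrt h2 (D := -p) (by omega) hp (by simp)
      (δ := algebraMap F K i * s) ?_ (not_isSquare_neg hi hD) hi hodd (m := 2) ?_ (Or.inl ?_)
    · rw [mul_pow, ← map_pow, hi, hs]
      simp
    · exact fun v hv => sq_dvd_absNorm hp (by omega) hj hv
    · rw [hF]
      norm_num

theorem odd_classNumber_adjoin_sqrt_biquadratic (hF : Module.finrank ℚ F = 4)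
    (h2 : Module.finrank F K = 2) (hodd : Odd (classNumber F)) {i : F} (hi : i ^ 2 = -1)
    {p q : ℕ} (hp : p.Prime) (hp8 : p % 8 = 5 ∨ p % 8 = 3) (hq : q.Prime) (hq4 : q % 4 = 3)
    (hpq : jacobiSym p q = -1) {s : F} (hs : s ^ 2 = p) {r : K} (hr : r ^ 2 = q)
    (hD : ¬ IsSquare (q : F)) : Odd (classNumber K) := by
  obtain ⟨j, hj⟩ := exists_integer_sq_eq (n := -1) (by simpa using hi)
  rw [Int.cast_neg, Int.cast_one] at hj
  obtain ⟨t, ht⟩ := exists_integer_sq_eq (n := p) (by simpa using hs)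
  rw [Int.cast_natCast] at ht
  refine odd_classNumber_of_sqrt h2 (D := -q) (by omega) hq (by simp)
    (δ := algebraMap F K i * r) ?_ (not_isSquare_neg hi hD) hi hodd (m := 2) ?_
    (Or.inr ⟨by rw [hF], ?_⟩)
  · rw [mul_pow, ← map_pow, hi, hr]
    simp
  · exact fun v hv => sq_dvd_absNorm hq hq4 hj hv
  have hcard {v : HeightOneSpectrum (𝓞 F)} (hv : Ideal.absNorm v.asIdeal = q ^ 2) :
      Nat.card (𝓞 F ⧸ v.asIdeal) = q ^ 2 := by
    rw [← Submodule.cardQuot_apply, ← Ideal.absNorm_apply, hv]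
  obtain hp8 | hp8 := hp8
  · obtain ⟨a, b, hab⟩ := exists_sq_sub_prime_mul_sq_eq_neg_one hp (by omega)
    obtain ⟨ε, hε⟩ := exists_unit_eq_add_mul ht hab
    refine ⟨ε, fun v hv hnorm => ?_⟩
    let := Ideal.Quotient.field v.asIdeal
    have h := not_isSquare_add_mul hq hq4 hpq (hcard hnorm) (natCast_eq_zero_residue hv)
      (S := Ideal.Quotient.mk v.asIdeal t) (by rw [← map_pow, ht, map_natCast]) hab
    simpa [hε] using h
  · obtain ⟨a, b, hab⟩ := exists_sq_sub_prime_mul_sq_eq_neg_two hp hp8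
    obtain ⟨ε, hε⟩ := exists_unit_two_mul_eq ht hj hab
    refine ⟨ε, fun v hv hnorm => ?_⟩
    let := Ideal.Quotient.field v.asIdeal
    refine not_isSquare_of_two_mul_eq hq hq4 hpq (hcard hnorm) (natCast_eq_zero_residue hv)
      (S := Ideal.Quotient.mk v.asIdeal t) (by rw [← map_pow, ht, map_natCast]) hab
      (I := Ideal.Quotient.mk v.asIdeal j) (by rw [← map_pow, hj, map_neg, map_one]) ?_
    simpa [map_ofNat] using congrArg (Ideal.Quotient.mk v.asIdeal) hε

end tower

theorem odd_classNumber_triquadratic {K : Type*} [Field K] [NumberField K] {p q : ℕ}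
    (hp : p.Prime) (hp8 : p % 8 = 5 ∨ p % 8 = 3) (hq : q.Prime) (hq4 : q % 4 = 3)
    (hpq : jacobiSym p q = -1) {s r i : K} (hs : s ^ 2 = p) (hr : r ^ 2 = q) (hi : i ^ 2 = -1)
    (htop : adjoin ℚ {s, r, i} = ⊤) : Odd (classNumber K) := by
  have hne : p ≠ q := by
    rintro rfl
    have : NeZero p := ⟨hp.ne_zero⟩
    have : jacobiSym (p : ℤ) p = 0 := by
      rw [jacobiSym.eq_zero_iff_not_coprime]
      simpa using hp.ne_one
    omega
  have hneg := not_isSquare_neg_one_rat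
  have h1 : Module.finrank ℚ ℚ⟮i⟯ = 2 := finrank_adjoin_sqrt hneg (by simp [hi])
  have hi1 : (AdjoinSimple.gen ℚ i) ^ 2 = -1 := Subtype.ext (by simpa using hi)
  have hp1 : ¬ IsSquare (p : ℚ⟮i⟯) :=
    not_isSquare_cast_gaussian h1 hi1 (Nat.prime_iff.mp hp).not_isSquare
  have h2 : Module.finrank ℚ⟮i⟯ ℚ⟮i⟯⟮s⟯ = 2 := finrank_adjoin_sqrt hp1 (by simp [hs])
  have hs2 : (AdjoinSimple.gen ℚ⟮i⟯ s) ^ 2 = p := Subtype.ext (by simpa using hs)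
  have : NumberField ℚ⟮i⟯⟮s⟯ := NumberField.of_module_finite ℚ⟮i⟯ ℚ⟮i⟯⟮s⟯
  have h4 : Module.finrank ℚ ℚ⟮i⟯⟮s⟯ = 4 := by
    rw [← Module.finrank_mul_finrank ℚ ℚ⟮i⟯ ℚ⟮i⟯⟮s⟯, h1, h2]
  have hq2 : ¬ IsSquare (q : ℚ⟮i⟯⟮s⟯) := by
    intro h
    obtain h | h := isSquare_or_isSquare_mul h2 hp1 (δ := AdjoinSimple.gen ℚ⟮i⟯ s)
      (by rw [hs2, map_natCast]) (c := (q : ℚ⟮i⟯)) (by rwa [map_natCast])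
    · exact not_isSquare_cast_gaussian h1 hi1 (Nat.prime_iff.mp hq).not_isSquare h
    · exact not_isSquare_cast_gaussian h1 hi1 (not_isSquare_mul_of_prime hp hq hne)
        (by rwa [Nat.cast_mul])
  have htop' : ℚ⟮i⟯⟮s⟯⟮r⟯ = ⊤ := by
    refine eq_top_iff.mpr fun x _ => ?_
    have hx : x ∈ adjoin ℚ {s, r, i} := htop ▸ mem_top
    refine adjoin_le_iff (T := restrictScalars ℚ ℚ⟮i⟯⟮s⟯⟮r⟯) |>.mpr ?_ hx
    rintro y (rfl | rfl | rfl)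
    · exact IntermediateField.algebraMap_mem ℚ⟮i⟯⟮y⟯⟮r⟯ (AdjoinSimple.gen ℚ⟮i⟯ y)
    · exact mem_adjoin_simple_self _ y
    · exact IntermediateField.algebraMap_mem ℚ⟮y⟯⟮s⟯⟮r⟯
        (algebraMap ℚ⟮y⟯ ℚ⟮y⟯⟮s⟯ (AdjoinSimple.gen ℚ y))
  have h3 : Module.finrank ℚ⟮i⟯⟮s⟯ K = 2 := by
    rw [← finrank_top', ← htop']
    exact finrank_adjoin_sqrt hq2 (by simp [hr])
  exact odd_classNumber_adjoin_sqrt_biquadratic h4 h3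
    (odd_classNumber_adjoin_sqrt_gaussian h1 h2 hi1 hp hp8 hs2 hp1)
    (i := algebraMap ℚ⟮i⟯ ℚ⟮i⟯⟮s⟯ (AdjoinSimple.gen ℚ i)) (by rw [← map_pow, hi1, map_neg, map_one])
    hp hp8 hq hq4 hpq hs2 hr hq2

theorem mod_eight_of_jacobiSym_two {p : ℕ} (hp : p.Prime) (h : jacobiSym 2 p = -1) :
    p % 8 = 5 ∨ p % 8 = 3 := by
  obtain rfl | hodd := hp.eq_two_or_odd
  · simp [jacobiSym.eq_zero_iff_not_coprime.mpr] at h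
  rw [jacobiSym.at_two (Nat.odd_iff.mpr hodd), ZMod.χ₈_nat_eq_if_mod_eight] at h
  split_ifs at h
  omega

theorem adjoin_preimage_coe_eq_top {F E : Type*} [Field F] [Field E] [Algebra F E] (S : Set E) :
    adjoin F (((↑) : adjoin F S → E) ⁻¹' S) = ⊤ := by
  apply lift_injective
  rw [lift_adjoin, lift_top, Set.image_preimage_eq_of_subset]
  exact fun x hx => ⟨⟨x, subset_adjoin F S hx⟩, rfl⟩

theorem statement4 (p q : ℕ) (h : Cond1 p q ∨ Cond2 p q) [NumberField ↥(Kf p q)] :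
    Odd (classNumber ↥(Kf p q)) := by
  have hsqrt (n : ℕ) : ((Real.sqrt n : ℝ) : ℂ) ^ 2 = n := by
    rw [← Complex.ofReal_pow, Real.sq_sqrt (Nat.cast_nonneg n), Complex.ofReal_natCast]
  obtain ⟨hp, hq, hq4, h2p, hpq⟩ : p.Prime ∧ q.Prime ∧ q % 4 = 3 ∧ jacobiSym 2 p = -1 ∧
      jacobiSym (p : ℤ) q = -1 := by
    obtain ⟨hp, hq, -, hq4, h2p, -, hpq⟩ | ⟨hp, hq, -, hq4, h2p, -, hpq⟩ := h <;>
      exact ⟨hp, hq, hq4, h2p, hpq⟩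
  set A : Set ℂ := {((Real.sqrt p : ℝ) : ℂ), ((Real.sqrt q : ℝ) : ℂ), Complex.I}
  have hmem : ∀ x ∈ A, x ∈ Kf p q := fun x hx => subset_adjoin ℚ A hx
  have htop : @adjoin ℚ _ (Kf p q) _ (Kf p q).algebra' ((↑) ⁻¹' A) = ⊤ :=
    adjoin_preimage_coe_eq_top A
  rw [Subsingleton.elim (Kf p q).algebra' DivisionRing.toRatAlgebra] at htop
  refine odd_classNumber_triquadratic hp (mod_eight_of_jacobiSym_two hp h2p) hq hq4 hpq
    (s := ⟨_, hmem (Real.sqrt p : ℝ) (by simp [A])⟩)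
    (r := ⟨_, hmem (Real.sqrt q : ℝ) (by simp [A])⟩)
    (i := ⟨_, hmem Complex.I (by simp [A])⟩) (Subtype.ext (hsqrt p)) (Subtype.ext (hsqrt q))
    (Subtype.ext (by simp)) ?_
  convert htop using 2
  ext x
  simp [A, Subtype.ext_iff]
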